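/- Fix a real number c with 0 ≤ c < 1 and set ξ∨ = (2/3)√(1−c²)(√(3+c²) − c). Then ψ₃(t,ξ∨) ≤ 0 for all t ∈ [−1,1] and the second derivative (in t) of ψ₃(·,ξ∨) vanishes at t = ±1 (so ±1 are triple zeros of ψ₃(·,ξ∨)); moreover, for every ξ > 0 such that ψ₃(t,ξ) ≤ 0 for all t ∈ [−1,1], sup over t ∈ [−1,1] of |ψ₃(t,ξ)| is at least sup over t ∈ [−1,1] of |ψ₃(t,ξ∨)|; i.e., ξ∨ induces the optimal inner cubic G¹ approximant. -/

import Mathlib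

/-- Simplified radial error of the cubic G¹ Bézier approximant of the unit circular arc. -/
noncomputable def psi3 (c t ξ : ℝ) : ℝ :=
  (1/16) * (1 - t^2)^2 *
    (9*ξ^2*(c^2*t^2 + 1 - c^2) + 12*ξ*(2 - t^2)*c*Real.sqrt (1 - c^2)
      - 4*(4 - t^2)*(1 - c^2))

/-- Sup over `t ∈ [−1,1]` of `|f t|`. -/
noncomputable def errSup (f : ℝ → ℝ) : ℝ :=
  sSup ((fun t => |f t|) '' Set.Icc (-1 : ℝ) 1)

theorem psi3_form (c t ξ : ℝ) (h : 0 ≤ 1 - c^2) : psi3 c t ξ = (1/16) * (1 - t^2)^2 *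
    ((9*ξ^2 + 12*ξ*c*Real.sqrt (1 - c^2) - 12 * (1 - c^2))
      - (1 - t^2) * (2 * Real.sqrt (1 - c^2) - 3 * c * ξ)^2) := by
  have hs := Real.sq_sqrt h
  unfold psi3
  linear_combination (-(1/16)) * (1 - t^2)^2 * (-4 * (1 - t^2)) * hs

theorem iter_cube (k : ℝ) (x : ℝ) :
    iteratedDeriv 2 (fun t : ℝ => k * (1 - t^2)^3) x
      = k * (6 * (1 - x^2) * (5 * x^2 - 1)) := by
  have h1 : ∀ y : ℝ, HasDerivAt (fun t : ℝ => k * (1 - t^2)^3) (k * (-6 * y * (1 - y^2)^2)) y := by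
    intro y
    have := ((((hasDerivAt_id y).pow 2).const_sub 1).pow 3).const_mul k
    refine HasDerivAt.congr_deriv this ?_
    simp [-mul_eq_mul_left_iff]
    ring
  have h2 : HasDerivAt (fun y : ℝ => k * (-6 * y * (1 - y^2)^2))
      (k * (6 * (1 - x^2) * (5 * x^2 - 1))) x := by
    have := ((((hasDerivAt_id x).const_mul (-6)).mul
      ((((hasDerivAt_id x).pow 2).const_sub 1).pow 2))).const_mul k
    refine HasDerivAt.congr_deriv this ?_
    simp [-mul_eq_mul_left_iff]
    ring
  rw [iteratedDeriv_succ, iteratedDeriv_one]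
  rw [show deriv (fun t : ℝ => k * (1 - t^2)^3) = fun y => k * (-6 * y * (1 - y^2)^2) from
    funext fun y => (h1 y).deriv]
  exact h2.deriv

/-- `ξ∨ = (2/3)√(1−c²)(√(3+c²) − c)` induces the optimal inner cubic G¹ approximant,
with `±1` triple zeros of `ψ₃(·,ξ∨)` (the second derivative in `t` vanishes there). -/
theorem stmt_5 (c : ℝ) (hc0 : 0 ≤ c) (hc1 : c < 1) :
    (∀ t ∈ Set.Icc (-1 : ℝ) 1,
      psi3 c t ((2/3)*Real.sqrt (1 - c^2)*(Real.sqrt (3 + c^2) - c)) ≤ 0) ∧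
    iteratedDeriv 2
      (fun t => psi3 c t ((2/3)*Real.sqrt (1 - c^2)*(Real.sqrt (3 + c^2) - c))) 1 = 0 ∧
    iteratedDeriv 2
      (fun t => psi3 c t ((2/3)*Real.sqrt (1 - c^2)*(Real.sqrt (3 + c^2) - c))) (-1) = 0 ∧
    ∀ ξ > (0 : ℝ), (∀ t ∈ Set.Icc (-1 : ℝ) 1, psi3 c t ξ ≤ 0) →
      errSup (fun t => psi3 c t ((2/3)*Real.sqrt (1 - c^2)*(Real.sqrt (3 + c^2) - c))) ≤
        errSup (fun t => psi3 c t ξ) := by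
  have hp : 0 < 1 - c^2 := by nlinarith
  set s := Real.sqrt (1 - c^2) with hsdef
  have hs0 : 0 < s := Real.sqrt_pos.mpr hp
  have hs2 : s^2 = 1 - c^2 := Real.sq_sqrt hp.le
  set r := Real.sqrt (3 + c^2) with hrdef
  have hr2 : r^2 = 3 + c^2 := Real.sq_sqrt (by positivity)
  have hr0 : 0 ≤ r := Real.sqrt_nonneg _
  have hrc : c < r := by nlinarith
  set X := (2/3) * s * (r - c) with hX
  have hX0 : 0 < X := by
    have : 0 < r - c := by linarith
    positivity
  have hA : 9*X^2 + 12*X*c*s - 12*(1-c^2) = 0 := by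
    rw [hX]
    linear_combination 4 * s^2 * hr2 + 12 * hs2
  have hform : ∀ t, psi3 c t X = (-(1/16) * (2*s - 3*c*X)^2) * (1 - t^2)^3 := by
    intro t
    rw [psi3_form c t X hp.le, ← hsdef, hA]
    ring
  have hneg : ∀ t ∈ Set.Icc (-1 : ℝ) 1, psi3 c t X ≤ 0 := by
    intro t ht
    have hq : 0 ≤ 1 - t^2 := by nlinarith [ht.1, ht.2]
    rw [hform]
    have : 0 ≤ (1/16) * (2*s - 3*c*X)^2 * (1 - t^2)^3 := by positivity
    linarith
  refine ⟨hneg, ?_, ?_, ?_⟩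
  · rw [funext hform, iter_cube]; norm_num
  · rw [funext hform, iter_cube]; norm_num
  intro ξ hξ hin
  have hle : ξ ≤ X := by
    by_contra! hlt
    set A := 9*ξ^2 + 12*ξ*c*s - 12*(1-c^2) with hAdef
    have hApos : 0 < A := by
      have : A = (ξ - X) * (9 * (ξ + X) + 12 * c * s) := by
        rw [hAdef]; linear_combination hA
      rw [this]
      have : 0 < ξ - X := by linarith
      positivity
    set D := (2*s - 3*c*ξ)^2 with hD
    have hD0 : 0 ≤ D := sq_nonneg _
    have hq0 : 0 < A / (A + D + 1) := by positivity
    have hq1 : A / (A + D + 1) ≤ 1 := by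
      rw [div_le_one (by positivity)]; linarith
    have hqd : A / (A + D + 1) * (A + D + 1) = A := by field_simp
    set q := A / (A + D + 1)
    have ht2 : Real.sqrt (1 - q) ^ 2 = 1 - q := Real.sq_sqrt (by linarith)
    have := hin (Real.sqrt (1 - q)) ⟨by linarith [Real.sqrt_nonneg (1 - q)], by
      rw [Real.sqrt_le_iff]; constructor <;> linarith⟩
    rw [psi3_form c _ ξ hp.le, ← hsdef, ht2, ← hAdef, ← hD] at this
    have h1 : 0 < A - (1 - (1 - q)) * D := by nlinarith
    have h2 : 0 < (1 - (1 - q)) := by linarith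
    have h3 : 0 < 1 / 16 * (1 - (1 - q)) ^ 2 * (A - (1 - (1 - q)) * D) := by positivity
    linarith
  have hmono : ∀ t ∈ Set.Icc (-1 : ℝ) 1, |psi3 c t X| ≤ |psi3 c t ξ| := by
    intro t ht
    rw [abs_of_nonpos (hneg t ht), abs_of_nonpos (hin t ht), neg_le_neg_iff]
    have ht2 : t^2 ≤ 1 := by nlinarith [ht.1, ht.2]
    have e : psi3 c t X - psi3 c t ξ = (1/16) * (1 - t^2)^2 * ((X - ξ) *
        (9 * (X + ξ) * (c^2*t^2 + (1 - c^2)) + 12 * (2 - t^2) * c * s)) := by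
      unfold psi3; rw [← hsdef]; ring
    have h1 : 0 ≤ X - ξ := by linarith
    have h2 : 0 ≤ 2 - t^2 := by linarith
    have h3 : 0 ≤ psi3 c t X - psi3 c t ξ := by
      rw [e]
      positivity
    linarith
  have hbdd : BddAbove ((fun t => |psi3 c t ξ|) '' Set.Icc (-1 : ℝ) 1) := by
    apply IsCompact.bddAbove_image isCompact_Icc
    unfold psi3
    fun_prop
  unfold errSup
  apply csSup_le
  · exact ⟨_, 0, by norm_num, rfl⟩
  · rintro _ ⟨t, ht, rfl⟩
    exact (hmono t ht).trans (le_csSup hbdd ⟨t, ht, rfl⟩)
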